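/- arXiv:1811.09469 — 3 statements merged into one kernel-verified Lean document; each statement's English description precedes it below -/
import Mathlib

section
/- Let Θ be a measurable space, let μ and ν be probability measures on Θ, let G : Θ → ℝ be a bounded measurable nonnegative function with ‖G‖∞ = sup_θ |G(θ)|, ∫_Θ G dμ > 0 and ∫_Θ G dν > 0, and let e ≥ 0 be such that |∫_Θ ψ dμ − ∫_Θ ψ dν| ≤ e · sup_θ |ψ(θ)| for every bounded measurable ψ : Θ → ℝ. Then for every bounded measurable φ : Θ → ℝ with ‖φ‖∞ = sup_θ |φ(θ)|, | (∫_Θ φG dμ)/(∫_Θ G dμ) − (∫_Θ φG dν)/(∫_Θ G dν) | ≤ 2 e ‖G‖∞ ‖φ‖∞ / (∫_Θ G dμ). -/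
open MeasureTheory

/-- Weighting-step stability bound: if `ν` approximates `μ` uniformly over
bounded measurable test functions with error `e`, then the Bayes update of `ν`
with a bounded nonnegative potential `G` approximates the Bayes update of `μ`
with error at most `2e‖G‖∞‖φ‖∞ / ∫G dμ`. -/
theorem bayes_update_stability
    {Θ : Type*} [MeasurableSpace Θ]
    (μ ν : Measure Θ) [IsProbabilityMeasure μ] [IsProbabilityMeasure ν]
    (G : Θ → ℝ) (hGmeas : Measurable G) (hGnn : ∀ θ, 0 ≤ G θ)
    (hGbdd : BddAbove (Set.range fun θ => |G θ|))
    (hGμ : 0 < ∫ θ, G θ ∂μ) (hGν : 0 < ∫ θ, G θ ∂ν)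
    (e : ℝ) (he : 0 ≤ e)
    (happrox : ∀ ψ : Θ → ℝ, Measurable ψ → BddAbove (Set.range fun θ => |ψ θ|) →
      |(∫ θ, ψ θ ∂μ) - ∫ θ, ψ θ ∂ν| ≤ e * ⨆ θ, |ψ θ|) :
    ∀ φ : Θ → ℝ, Measurable φ → BddAbove (Set.range fun θ => |φ θ|) →
      |(∫ θ, φ θ * G θ ∂μ) / (∫ θ, G θ ∂μ) - (∫ θ, φ θ * G θ ∂ν) / (∫ θ, G θ ∂ν)|
        ≤ 2 * e * (⨆ θ, |G θ|) * (⨆ θ, |φ θ|) / (∫ θ, G θ ∂μ) := by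
  intro φ hφm hφb
  have hF : ∀ θ, |φ θ| ≤ ⨆ θ, |φ θ| := fun θ => le_ciSup hφb θ
  have hK : ∀ θ, |G θ| ≤ ⨆ θ, |G θ| := fun θ => le_ciSup hGbdd θ
  have hF0 : 0 ≤ ⨆ θ, |φ θ| := Real.iSup_nonneg fun θ => abs_nonneg _
  have hK0 : 0 ≤ ⨆ θ, |G θ| := Real.iSup_nonneg fun θ => abs_nonneg _
  have h2 := happrox G hGmeas hGbdd
  set F := ⨆ θ, |φ θ|
  set K := ⨆ θ, |G θ|
  have hP : ∀ θ, |φ θ * G θ| ≤ K * F := fun θ => by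
    rw [abs_mul, mul_comm]
    exact mul_le_mul (hK θ) (hF θ) (abs_nonneg _) hK0
  have h1 : |(∫ θ, φ θ * G θ ∂μ) - ∫ θ, φ θ * G θ ∂ν| ≤ e * (K * F) := by
    refine (happrox (fun θ => φ θ * G θ) (hφm.mul hGmeas) ⟨K * F, ?_⟩).trans ?_
    · rintro _ ⟨θ, rfl⟩
      exact hP θ
    · exact mul_le_mul_of_nonneg_left
        (Real.iSup_le hP (mul_nonneg hK0 hF0)) he
  have hGi : Integrable G ν :=
    Integrable.of_bound hGmeas.aestronglyMeasurable K (Filter.Eventually.of_forall hK)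
  have h3 : |∫ θ, φ θ * G θ ∂ν| ≤ F * ∫ θ, G θ ∂ν := by
    rw [← integral_const_mul, ← Real.norm_eq_abs]
    refine norm_integral_le_of_norm_le (hGi.const_mul F) (Filter.Eventually.of_forall fun θ => ?_)
    rw [Real.norm_eq_abs, abs_mul, abs_of_nonneg (hGnn θ)]
    exact mul_le_mul_of_nonneg_right (hF θ) (hGnn θ)
  generalize (∫ θ, φ θ * G θ ∂μ) = a at *
  generalize (∫ θ, φ θ * G θ ∂ν) = c at *
  generalize (∫ θ, G θ ∂μ) = b at *
  generalize (∫ θ, G θ ∂ν) = d at *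
  have h4 : |c / d| ≤ F := by
    rw [abs_div, abs_of_pos hGν, div_le_iff₀ hGν]
    exact h3
  have h5 : a / b - c / d = ((a - c) - (c / d) * (b - d)) / b := by
    field_simp
    ring
  rw [h5, abs_div, abs_of_pos hGμ]
  refine div_le_div_of_nonneg_right ?_ hGμ.le
  calc |(a - c) - (c / d) * (b - d)| ≤ |a - c| + |(c / d) * (b - d)| := abs_sub _ _
    _ ≤ e * (K * F) + F * (e * K) := by
      rw [abs_mul]
      exact add_le_add h1 (mul_le_mul h4 h2 (abs_nonneg _) hF0)
    _ = 2 * e * K * F := by ring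
end

section
/- Let (Θ, dist) be a metric space, let f : Θ → ℝ be bounded with M = sup_{θ∈Θ} |f(θ)| < ∞, let θ⋆ ∈ Θ be a global minimizer of f, let Z > 0, and suppose the density π(θ) = exp(−f(θ))/Z is L-Lipschitz on Θ for some L ≥ 0. Let e ≥ 0 and let p : Θ → ℝ satisfy |p(θ) − π(θ)| ≤ e for every θ ∈ Θ. Let S ⊆ Θ be a nonempty set containing a point s₀ with dist(s₀, θ⋆) ≤ r for some r ≥ 0, and let θ̂ ∈ S satisfy p(s) ≤ p(θ̂) for all s ∈ S. Then 0 ≤ f(θ̂) − f(θ⋆) ≤ Z · exp(M) · (2e + L·r). -/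
/-- Cost suboptimality of the particle-grid maximizer of a kernel density
estimate: if the Gibbs density `π(θ) = exp(−f(θ))/Z` is `L`-Lipschitz, `p`
approximates `π` uniformly within `e`, and `θ̂` maximizes `p` over a particle
set `S` containing a point within distance `r` of a global minimizer `θ⋆` of
the bounded cost `f`, then `0 ≤ f(θ̂) − f(θ⋆) ≤ Z exp(M) (2e + Lr)`. -/
theorem cost_suboptimality_of_grid_density_maximizer
    {Θ : Type*} [MetricSpace Θ] (f : Θ → ℝ) (M : ℝ) (hM : ∀ θ : Θ, |f θ| ≤ M)
    (θstar : Θ) (hmin : ∀ θ : Θ, f θstar ≤ f θ)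
    (Z : ℝ) (hZ : 0 < Z) (L : ℝ) (hL : 0 ≤ L)
    (hLip : ∀ θ θ' : Θ,
      |Real.exp (-f θ) / Z - Real.exp (-f θ') / Z| ≤ L * dist θ θ')
    (e : ℝ) (he : 0 ≤ e) (p : Θ → ℝ)
    (hp : ∀ θ : Θ, |p θ - Real.exp (-f θ) / Z| ≤ e)
    (S : Set Θ) (r : ℝ) (hr : 0 ≤ r)
    (s₀ : Θ) (hs₀S : s₀ ∈ S) (hs₀ : dist s₀ θstar ≤ r)
    (θhat : Θ) (hθhatS : θhat ∈ S) (hθhat : ∀ s ∈ S, p s ≤ p θhat) :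
    0 ≤ f θhat - f θstar ∧
      f θhat - f θstar ≤ Z * Real.exp M * (2 * e + L * r) := by
  refine ⟨sub_nonneg.mpr (hmin θhat), ?_⟩
  have h1 := abs_le.mp (hp θhat)
  have h2 := abs_le.mp (hp s₀)
  have h3 := abs_le.mp (hLip s₀ θstar)
  have h4 := hθhat s₀ hs₀S
  have h5 : L * dist s₀ θstar ≤ L * r := mul_le_mul_of_nonneg_left hs₀ hL
  have h6 : (Real.exp (-f θstar) - Real.exp (-f θhat)) / Z ≤ 2 * e + L * r := by
    rw [sub_div]
    linarith [h1.2, h2.1, h3.1]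
  rw [div_le_iff₀ hZ] at h6
  have h7 : 0 ≤ Z * (2 * e + L * r) := by positivity
  have h8 : Real.exp (f θhat) ≤ Real.exp M :=
    Real.exp_le_exp.mpr ((le_abs_self _).trans (hM θhat))
  have h9 := Real.add_one_le_exp (f θhat - f θstar)
  have h10 : Real.exp (f θhat - f θstar) - 1
      = Real.exp (f θhat) * (Real.exp (-f θstar) - Real.exp (-f θhat)) := by
    rw [mul_sub, ← Real.exp_add, ← Real.exp_add, add_neg_cancel, Real.exp_zero, sub_eq_add_neg (f θhat)]
  calc f θhat - f θstar
      ≤ Real.exp (f θhat) * (Real.exp (-f θstar) - Real.exp (-f θhat)) := by linarith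
    _ ≤ Real.exp (f θhat) * (Z * (2 * e + L * r)) :=
        mul_le_mul_of_nonneg_left (by linarith) (Real.exp_pos _).le
    _ ≤ Real.exp M * (Z * (2 * e + L * r)) := mul_le_mul_of_nonneg_right h8 h7
    _ = Z * Real.exp M * (2 * e + L * r) := by ring
end

section
/- Let (Ω, 𝓕, ℙ) be a probability space, Θ a measurable space, π a probability measure on Θ, and let μ be a Markov kernel from Ω to Θ (so that ω ↦ μ_ω is a measurable family of probability measures on Θ). Let N ≥ 1 be an integer, p ≥ 1 a real number, and c ≥ 0, and suppose that for every bounded measurable φ : Θ → ℝ, ( 𝔼[ |∫_Θ φ dμ_ω − ∫_Θ φ dπ|^p ] )^{1/p} ≤ c ‖φ‖∞ / √N. Let G : Θ → ℝ be a bounded measurable nonnegative function with ‖G‖∞ = sup_θ |G(θ)|, ∫_Θ G dπ > 0, and ∫_Θ G dμ_ω > 0 for every ω ∈ Ω. Then for every bounded measurable φ : Θ → ℝ, ( 𝔼[ | (∫_Θ φG dμ_ω)/(∫_Θ G dμ_ω) − (∫_Θ φG dπ)/(∫_Θ G dπ) |^p ] )^{1/p} ≤ 2 c ‖G‖∞ ‖φ‖∞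 / ( (∫_Θ G dπ) √N ). -/
open MeasureTheory ProbabilityTheory

theorem bayes_aux_lp {Ω : Type*} [MeasurableSpace Ω] (P : Measure Ω) (p : ℝ) (hp : 1 ≤ p)
    (f : Ω → ℝ) (hf : MemLp f (ENNReal.ofReal p) P) :
    (∫ ω, |f ω| ^ p ∂P) ^ (1 / p) = (eLpNorm f (ENNReal.ofReal p) P).toReal := by
  have hp0 : 0 < p := by linarith
  rw [hf.eLpNorm_eq_integral_rpow_norm (by simpa using hp0) ENNReal.ofReal_ne_top,
    ENNReal.toReal_ofReal hp0.le, ENNReal.toReal_ofReal (by positivity)]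
  simp [Real.norm_eq_abs]

theorem bayes_aux_int {Θ : Type*} [MeasurableSpace Θ] (ν : Measure Θ) [IsProbabilityMeasure ν]
    (f : Θ → ℝ) (C : ℝ) (hf : ∀ θ, |f θ| ≤ C) : |∫ θ, f θ ∂ν| ≤ C := by
  have := norm_integral_le_of_norm_le_const (μ := ν) (f := f) (C := C) (ae_of_all _ hf)
  simpa using this

theorem bayes_aux_memLp {Ω Θ : Type*} [MeasurableSpace Ω] [MeasurableSpace Θ]
    (P : Measure Ω) [IsProbabilityMeasure P] (π : Measure Θ) [IsProbabilityMeasure π]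
    (μ : Kernel Ω Θ) [IsMarkovKernel μ] (q : ENNReal)
    (f : Θ → ℝ) (hm : Measurable f) (C : ℝ) (hf : ∀ θ, |f θ| ≤ C) :
    MemLp (fun ω => (∫ θ, f θ ∂(μ ω)) - ∫ θ, f θ ∂π) q P := by
  have hsm : StronglyMeasurable (fun ω => ∫ θ, f θ ∂(μ ω)) :=
    hm.stronglyMeasurable.integral_kernel
  refine MemLp.of_bound (hsm.aestronglyMeasurable.sub aestronglyMeasurable_const) (C + C)
    (ae_of_all _ fun ω => ?_)
  refine (norm_sub_le _ _).trans (add_le_add ?_ ?_)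
  · exact bayes_aux_int (μ ω) f C hf
  · exact bayes_aux_int π f C hf

/-- Weighting-step `L^p` stability: if the random measure `μ_ω` approximates
`π` in `L^p` with rate `c‖φ‖∞/√N` uniformly over bounded measurable test
functions, then its Bayes update with a bounded nonnegative potential `G`
approximates the Bayes update of `π` at rate `2c‖G‖∞‖φ‖∞/((∫G dπ)√N)`. -/
theorem bayes_update_Lp_stability
    {Ω Θ : Type*} [MeasurableSpace Ω] [MeasurableSpace Θ]
    (P : Measure Ω) [IsProbabilityMeasure P]
    (π : Measure Θ) [IsProbabilityMeasure π]
    (μ : Kernel Ω Θ) [IsMarkovKernel μ]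
    (N : ℕ) (hN : 1 ≤ N) (p : ℝ) (hp : 1 ≤ p) (c : ℝ) (hc : 0 ≤ c)
    (happrox : ∀ ψ : Θ → ℝ, Measurable ψ → BddAbove (Set.range fun θ => |ψ θ|) →
      (∫ ω, |(∫ θ, ψ θ ∂(μ ω)) - ∫ θ, ψ θ ∂π| ^ p ∂P) ^ (1 / p)
        ≤ c * (⨆ θ, |ψ θ|) / Real.sqrt N)
    (G : Θ → ℝ) (hGmeas : Measurable G) (hGnn : ∀ θ, 0 ≤ G θ)
    (hGbdd : BddAbove (Set.range fun θ => |G θ|))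
    (hGπ : 0 < ∫ θ, G θ ∂π) (hGμ : ∀ ω : Ω, 0 < ∫ θ, G θ ∂(μ ω)) :
    ∀ φ : Θ → ℝ, Measurable φ → BddAbove (Set.range fun θ => |φ θ|) →
      (∫ ω, |(∫ θ, φ θ * G θ ∂(μ ω)) / (∫ θ, G θ ∂(μ ω))
            - (∫ θ, φ θ * G θ ∂π) / (∫ θ, G θ ∂π)| ^ p ∂P) ^ (1 / p)
        ≤ 2 * c * (⨆ θ, |G θ|) * (⨆ θ, |φ θ|)
            / ((∫ θ, G θ ∂π) * Real.sqrt N) := by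
  intro φ hφ hφb
  have hne : Nonempty Θ := nonempty_of_isProbabilityMeasure π
  have hp0 : 0 < p := by linarith
  set M := ⨆ θ, |φ θ| with hM
  set K := ⨆ θ, |G θ| with hK
  have hφM : ∀ θ, |φ θ| ≤ M := fun θ => le_ciSup hφb θ
  have hGK : ∀ θ, |G θ| ≤ K := fun θ => le_ciSup hGbdd θ
  have hM0 : 0 ≤ M := (abs_nonneg _).trans (hφM hne.some)
  have hK0 : 0 ≤ K := (abs_nonneg _).trans (hGK hne.some)
  have hφG : ∀ θ, |φ θ * G θ| ≤ M * K := fun θ => by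
    rw [abs_mul]
    exact mul_le_mul (hφM θ) (hGK θ) (abs_nonneg _) hM0
  have hφGm : Measurable fun θ => φ θ * G θ := hφ.mul hGmeas
  have hφGb : BddAbove (Set.range fun θ => |φ θ * G θ|) :=
    ⟨M * K, by rintro _ ⟨θ, rfl⟩; exact hφG θ⟩
  have hsup : (⨆ θ, |φ θ * G θ|) ≤ M * K := ciSup_le hφG
  have h1 := happrox G hGmeas hGbdd
  have h2 := happrox (fun θ => φ θ * G θ) hφGm hφGb
  have m1 := bayes_aux_memLp P π μ (ENNReal.ofReal p) G hGmeas K hGK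
  have m2 := bayes_aux_memLp P π μ (ENNReal.ofReal p) _ hφGm (M * K) hφG
  rw [bayes_aux_lp P p hp _ m1] at h1
  rw [bayes_aux_lp P p hp _ m2] at h2
  set b := ∫ θ, G θ ∂π with hb
  set a := ∫ θ, φ θ * G θ ∂π with ha
  have hratio : ∀ ω, |(∫ θ, φ θ * G θ ∂(μ ω)) / (∫ θ, G θ ∂(μ ω))| ≤ M := fun ω => by
    rw [abs_div, abs_of_pos (hGμ ω), div_le_iff₀ (hGμ ω), ← integral_const_mul]
    have hi : Integrable G (μ ω) :=
      Integrable.of_bound hGmeas.aestronglyMeasurable K (ae_of_all _ hGK)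
    refine norm_integral_le_of_norm_le (f := fun θ => φ θ * G θ)
      (hi.const_mul M) (ae_of_all _ fun θ => ?_)
    rw [Real.norm_eq_abs, abs_mul, abs_of_nonneg (hGnn θ)]
    exact mul_le_mul_of_nonneg_right (hφM θ) (hGnn θ)
  set X : Ω → ℝ := fun ω => (∫ θ, φ θ * G θ ∂(μ ω)) - a with hX
  set Y : Ω → ℝ := fun ω => (∫ θ, G θ ∂(μ ω)) - b with hY
  set Z : Ω → ℝ := fun ω => (∫ θ, φ θ * G θ ∂(μ ω)) / (∫ θ, G θ ∂(μ ω)) - a / b with hZ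
  have hZm : AEStronglyMeasurable Z P := by
    have e1 : StronglyMeasurable (fun ω => ∫ θ, φ θ * G θ ∂(μ ω)) :=
      hφGm.stronglyMeasurable.integral_kernel
    have e2 : StronglyMeasurable (fun ω => ∫ θ, G θ ∂(μ ω)) :=
      hGmeas.stronglyMeasurable.integral_kernel
    exact ((e1.measurable.div e2.measurable).sub_const _).aestronglyMeasurable
  have hbd : ∀ ω, ‖Z ω‖ ≤ ‖((M / b) • (fun ω => ‖Y ω‖) + (1 / b) • (fun ω => ‖X ω‖)) ω‖ := by
    intro ω
    have hr := hratio ω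
    have hB := hGμ ω
    have e : Z ω = ((∫ θ, φ θ * G θ ∂(μ ω)) / (∫ θ, G θ ∂(μ ω))) * (-Y ω / b) + X ω / b := by
      simp only [hZ, hX, hY]
      field_simp
      ring
    refine le_trans ?_ (le_abs_self _)
    rw [e]
    refine (norm_add_le _ _).trans ?_
    simp only [Pi.add_apply, Pi.smul_apply, smul_eq_mul, norm_mul, norm_div, norm_neg]
    rw [← norm_div, Real.norm_of_nonneg hGπ.le]
    have : ‖(∫ θ, φ θ * G θ ∂(μ ω)) / (∫ θ, G θ ∂(μ ω))‖ * (‖Y ω‖ / b) ≤ M * (‖Y ω‖ / b) :=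
      mul_le_mul_of_nonneg_right hr (by positivity)
    calc _ ≤ M * (‖Y ω‖ / b) + ‖X ω‖ / b := by gcongr
      _ = _ := by ring
  have m3 : MemLp ((M / b) • (fun ω => ‖Y ω‖)) (ENNReal.ofReal p) P := m1.norm.const_smul _
  have m4 : MemLp ((1 / b) • (fun ω => ‖X ω‖)) (ENNReal.ofReal p) P := m2.norm.const_smul _
  have mZ : MemLp Z (ENNReal.ofReal p) P := (m3.add m4).of_le hZm (ae_of_all _ hbd)
  rw [bayes_aux_lp P p hp Z mZ]
  have hle := (eLpNorm_mono_ae (p := ENNReal.ofReal p) (ae_of_all P hbd)).trans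
    (eLpNorm_add_le m3.1 m4.1 (by simpa using hp))
  have hle2 := ENNReal.toReal_mono (ENNReal.add_ne_top.2 ⟨m3.2.ne, m4.2.ne⟩) hle
  rw [ENNReal.toReal_add m3.2.ne m4.2.ne, eLpNorm_const_smul, eLpNorm_const_smul,
    eLpNorm_norm, eLpNorm_norm, ENNReal.toReal_mul, ENNReal.toReal_mul, toReal_enorm,
    toReal_enorm, Real.norm_of_nonneg (by positivity), Real.norm_of_nonneg (by positivity)] at hle2
  have hs : 0 < Real.sqrt N := Real.sqrt_pos.2 (by exact_mod_cast hN)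
  have h2' : (eLpNorm X (ENNReal.ofReal p) P).toReal ≤ c * (M * K) / Real.sqrt N :=
    h2.trans (by gcongr)
  calc _ ≤ _ := hle2
    _ ≤ M / b * (c * K / Real.sqrt N) + 1 / b * (c * (M * K) / Real.sqrt N) := by gcongr
    _ = _ := by field_simp; ring
end
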